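/- There is a constant C > 0 depending only on C₁, C₂ and L (and not on N or h) such that for every σ ∈ M, (Aσ, σ)_Γ ≤ C h^{−2} ‖σ‖²_{L²(0,L)}; i.e., the largest eigenvalue of A with respect to the L² inner product is at most C h^{−2}. -/

import Mathlib

open scoped ComplexOrder

/-- The operator `A : M → M` on piecewise constants (identified with their value vectors
`c : Fin N → ℂ`, indices mod `N`): `(Aσ)|_{τ_i} = c_i − ((c_{i+1} − c_i)/l_i² − (c_i − c_{i−1})/(l_i l_{i−1}))`. -/
noncomputable def Aop {N : ℕ} [NeZero N] (l : Fin N → ℝ) (c : Fin N → ℂ) : Fin N → ℂ :=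
  fun i => c i - ((c (i + 1) - c i) / (l i : ℂ) ^ 2
    - (c i - c (i - 1)) / ((l i : ℂ) * (l (i - 1) : ℂ)))

/-- The `L²(0,L)` inner product of two piecewise constants with value vectors `c, d`:
`(σ, μ)_Γ = ∫₀^L σ \overline{μ} ds = ∑ i, c_i \overline{d_i} l_i`. -/
noncomputable def ipGamma {N : ℕ} (l : Fin N → ℝ) (c d : Fin N → ℂ) : ℂ :=
  ∑ i, c i * (starRingEnd ℂ) (d i) * (l i : ℂ)

/-!
Summation by parts on the cyclic index set gives
`(Aσ, σ)_Γ = ∑ |c_i|² l_i + ∑ |c_{i+1} - c_i|² / l_i`.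
As `|c_{i+1} - c_i|² ≤ 2 |c_{i+1}|² + 2 |c_i|²` and every length is at least `δ = C₁ h`, the second
sum is at most `(4 / δ) ∑ |c_i|²`, hence at most `(4 / δ²) ‖σ‖²`. The first sum is
`‖σ‖² ≤ (L / h)² ‖σ‖²`, because `h` is one of the lengths and so `h ≤ L`.
-/

theorem sum_shift_sub_mul {ι R : Type*} [Fintype ι] [AddGroup ι] [NonUnitalNonAssocRing R]
    (s : ι) (w d : ι → R) :
    ∑ i, (w (i - s) - w i) * d i = ∑ i, w i * (d (i + s) - d i) := by
  have shift : ∑ i, w (i - s) * d i = ∑ i, w i * d (i + s) := by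
    simpa using (Equiv.sum_comp (Equiv.addRight s) fun i => w (i - s) * d i).symm
  simp only [sub_mul, mul_sub, Finset.sum_sub_distrib, shift]

section ShiftDifference

variable {ι E : Type*} [Fintype ι] [AddGroup ι] [SeminormedAddCommGroup E]

theorem sum_norm_shift_sub_sq_le (s : ι) (c : ι → E) :
    ∑ i, ‖c (i + s) - c i‖ ^ 2 ≤ 4 * ∑ i, ‖c i‖ ^ 2 := by
  have shift : ∑ i, ‖c (i + s)‖ ^ 2 = ∑ i, ‖c i‖ ^ 2 :=
    Equiv.sum_comp (Equiv.addRight s) fun i => ‖c i‖ ^ 2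
  calc ∑ i, ‖c (i + s) - c i‖ ^ 2
      ≤ ∑ i, (‖c (i + s)‖ + ‖c i‖) ^ 2 := by gcongr; exact norm_sub_le _ _
    _ ≤ ∑ i, 2 * (‖c (i + s)‖ ^ 2 + ‖c i‖ ^ 2) := by gcongr; exact add_sq_le
    _ = 4 * ∑ i, ‖c i‖ ^ 2 := by
      rw [← Finset.mul_sum, Finset.sum_add_distrib, shift]
      ring

theorem sum_norm_shift_sub_sq_div_le {δ : ℝ} (hδ : 0 < δ) {l : ι → ℝ} (hl : ∀ i, δ ≤ l i)
    (s : ι) (c : ι → E) :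
    ∑ i, ‖c (i + s) - c i‖ ^ 2 / l i ≤ 4 / δ ^ 2 * ∑ i, ‖c i‖ ^ 2 * l i := by
  calc ∑ i, ‖c (i + s) - c i‖ ^ 2 / l i
      ≤ ∑ i, ‖c (i + s) - c i‖ ^ 2 / δ := by gcongr; exact hl _
    _ = (∑ i, ‖c (i + s) - c i‖ ^ 2) / δ := by rw [Finset.sum_div]
    _ ≤ (4 * ∑ i, ‖c i‖ ^ 2) / δ := by gcongr; exact sum_norm_shift_sub_sq_le s c
    _ = 4 / δ ^ 2 * ∑ i, ‖c i‖ ^ 2 * δ := by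
      rw [← Finset.sum_mul]
      field_simp
    _ ≤ 4 / δ ^ 2 * ∑ i, ‖c i‖ ^ 2 * l i := by gcongr; exact hl _

end ShiftDifference

section Form

variable {N : ℕ} [NeZero N] {l : Fin N → ℝ}

theorem Aop_mul_length (hl : ∀ i, l i ≠ 0) (c : Fin N → ℂ) (i : Fin N) :
    Aop l c i * l i =
      c i * l i + ((c i - c (i - 1)) / l (i - 1) - (c (i + 1) - c i) / l i) := by
  have hi : (l i : ℂ) ≠ 0 := Complex.ofReal_ne_zero.mpr (hl i)
  have hpred : (l (i - 1) : ℂ) ≠ 0 := Complex.ofReal_ne_zero.mpr (hl (i - 1))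
  unfold Aop
  field_simp
  ring

theorem ipGamma_Aop_self (hl : ∀ i, l i ≠ 0) (c : Fin N → ℂ) :
    ipGamma l (Aop l c) c =
      ((∑ i, ‖c i‖ ^ 2 * l i + ∑ i, ‖c (i + 1) - c i‖ ^ 2 / l i : ℝ) : ℂ) := by
  let slope (i : Fin N) : ℂ := (c (i + 1) - c i) / l i
  have term (i : Fin N) : Aop l c i * starRingEnd ℂ (c i) * l i =
      (‖c i‖ : ℂ) ^ 2 * l i + (slope (i - 1) - slope i) * starRingEnd ℂ (c i) := by
    rw [mul_right_comm, Aop_mul_length hl, ← Complex.mul_conj']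
    simp only [slope, sub_add_cancel]
    ring
  have energy (i : Fin N) : slope i * (starRingEnd ℂ (c (i + 1)) - starRingEnd ℂ (c i)) =
      (‖c (i + 1) - c i‖ : ℂ) ^ 2 / l i := by
    rw [← map_sub, ← Complex.mul_conj', div_mul_eq_mul_div]
  calc ipGamma l (Aop l c) c
      = ∑ i, (‖c i‖ : ℂ) ^ 2 * l i + ∑ i, (slope (i - 1) - slope i) * starRingEnd ℂ (c i) := by
        simp only [ipGamma, term, Finset.sum_add_distrib]
    _ = ∑ i, (‖c i‖ : ℂ) ^ 2 * l i + ∑ i, (‖c (i + 1) - c i‖ : ℂ) ^ 2 / l i := by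
        rw [sum_shift_sub_mul 1 slope fun i => starRingEnd ℂ (c i)]
        simp only [energy]
    _ = _ := by push_cast; rfl

theorem ipGamma_Aop_self_le {δ : ℝ} (hδ : 0 < δ) (hl : ∀ i, δ ≤ l i) (c : Fin N → ℂ) :
    ipGamma l (Aop l c) c ≤ (((1 + 4 / δ ^ 2) * ∑ i, ‖c i‖ ^ 2 * l i : ℝ) : ℂ) := by
  rw [ipGamma_Aop_self (fun i => (hδ.trans_le (hl i)).ne'), Complex.real_le_real, one_add_mul]
  gcongr
  exact sum_norm_shift_sub_sq_div_le hδ hl 1 c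

end Form

/-- There is a constant `C > 0` depending only on the quasi-uniformity
constants `C₁, C₂` and `L` (not on `N` or `h`) such that for every quasi-uniform partition
(`C₁ h ≤ l_i ≤ C₂ h`, `h = max_i l_i`, `∑ l_i = L`) and every `σ ∈ M`,
`(Aσ, σ)_Γ ≤ C h⁻² ‖σ‖²_{L²(0,L)}` (with `‖σ‖²_{L²(0,L)} = ∑ |c_i|² l_i`). -/
theorem stmt_5 (C₁ C₂ L : ℝ) (hC₁ : 0 < C₁) (hC₂ : 0 < C₂) (hL : 0 < L) :
    ∃ C > 0, ∀ (N : ℕ) [NeZero N], 2 ≤ N →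
      ∀ (l : Fin N → ℝ), (∀ i, 0 < l i) → (∑ i, l i = L) →
      ∀ h : ℝ, IsGreatest (Set.range l) h →
      (∀ i, C₁ * h ≤ l i ∧ l i ≤ C₂ * h) →
      ∀ c : Fin N → ℂ,
        ipGamma l (Aop l c) c ≤ ((C / h ^ 2 * ∑ i, ‖c i‖ ^ 2 * l i : ℝ) : ℂ) := by
  refine ⟨L ^ 2 + 4 / C₁ ^ 2, by positivity, ?_⟩
  rintro N _ - l hl hsum _ ⟨⟨j, rfl⟩, -⟩ hquasi c
  have hj : 0 < l j := hl j
  have hjL : l j ≤ L :=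
    hsum ▸ Finset.single_le_sum (fun i _ => (hl i).le) (Finset.mem_univ j)
  have hconst : 1 + 4 / (C₁ * l j) ^ 2 ≤ (L ^ 2 + 4 / C₁ ^ 2) / l j ^ 2 := by
    calc 1 + 4 / (C₁ * l j) ^ 2 = (l j ^ 2 + 4 / C₁ ^ 2) / l j ^ 2 := by field_simp
      _ ≤ (L ^ 2 + 4 / C₁ ^ 2) / l j ^ 2 := by gcongr
  have hnorm : 0 ≤ ∑ i, ‖c i‖ ^ 2 * l i :=
    Finset.sum_nonneg fun i _ => mul_nonneg (sq_nonneg _) (hl i).le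
  exact (ipGamma_Aop_self_le (mul_pos hC₁ hj) (fun i => (hquasi i).1) c).trans
    (Complex.real_le_real.mpr (mul_le_mul_of_nonneg_right hconst hnorm))
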